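/- (Graph convex hull bounds, finite-dimensional case.) Let (Ω, Σ, ℙ) be a probability space, K ⊆ ℝ^m, f : K → ℝ, and X : Ω → K a random variable such that X and f∘X are integrable. Let g_l, g_u : CH(K) → [-∞, ∞] be functions such that for every x ∈ CH(K), the slice CH(G(f))|_x is contained in {y ∈ ℝ : g_l(x) ≤ y ≤ g_u(x)}. Then 𝔼[X] ∈ CH(K) and g_l(𝔼[X]) ≤ 𝔼[f(X)] ≤ g_u(𝔼[X]). -/

import Mathlib

open MeasureTheory

/-- Weak separation of a point from a convex set in finite dimension, with no closedness or
interior assumption. -/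
theorem Convex.exists_dual_ne_zero_forall_le_of_notMem {E : Type*} [NormedAddCommGroup E]
    [NormedSpace ℝ E] [FiniteDimensional ℝ E] {s : Set E} (hs : Convex ℝ s)
    (hne : s.Nonempty) {x : E} (hx : x ∉ s) :
    ∃ l : E →L[ℝ] ℝ, l ≠ 0 ∧ ∀ z ∈ s, l z ≤ l x := by
  by_cases hint : (interior s).Nonempty
  · exact geometric_hahn_banach_of_nonempty_interior_point hs
      (fun h => hx (interior_subset h)) hint
  · rw [hs.interior_nonempty_iff_affineSpan_eq_top,
      AffineSubspace.affineSpan_eq_top_iff_vectorSpan_eq_top_of_nonempty ℝ E E hne] at hint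
    obtain ⟨l, hl, hker⟩ := Submodule.exists_le_ker_of_lt_top _ (lt_top_iff_ne_top.2 hint)
    obtain ⟨z₀, hz₀⟩ := hne
    have hconst : ∀ z ∈ s, l z = l z₀ := fun z hz => by
      have := hker (vsub_mem_vectorSpan ℝ hz hz₀)
      rwa [LinearMap.mem_ker, vsub_eq_sub, map_sub, sub_eq_zero] at this
    have hl' : LinearMap.toContinuousLinearMap l ≠ 0 := by simpa using hl
    rcases le_total (l z₀) (l x) with h | h
    · exact ⟨LinearMap.toContinuousLinearMap l, hl', fun z hz => by simpa [hconst z hz] using h⟩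
    · exact ⟨-LinearMap.toContinuousLinearMap l, neg_ne_zero.2 hl',
        fun z hz => by simpa [hconst z hz] using h⟩

/-- In finite dimension the expectation of a random vector with values in a convex set belongs
to that set, even if the set is not closed. -/
theorem Convex.integral_mem_of_finiteDimensional {Ω : Type*} [MeasurableSpace Ω] {μ : Measure Ω}
    [IsProbabilityMeasure μ] {E : Type*} [NormedAddCommGroup E] [NormedSpace ℝ E]
    [FiniteDimensional ℝ E] {s : Set E} (hs : Convex ℝ s) {Z : Ω → E} (hZ : Integrable Z μ)
    (hZs : ∀ᵐ ω ∂μ, Z ω ∈ s) : ∫ ω, Z ω ∂μ ∈ s := by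
  induction hn : Module.finrank ℝ E using Nat.strong_induction_on generalizing E with
  | _ n ih =>
  by_contra hx
  set x := ∫ ω, Z ω ∂μ with hxdef
  obtain ⟨l, hl, hle⟩ := hs.exists_dual_ne_zero_forall_le_of_notMem
    (hZs.exists.elim fun ω hω => ⟨Z ω, hω⟩) hx
  have hlZ : Integrable (fun ω => l (Z ω)) μ := l.integrable_comp hZ
  have hlint : ∫ ω, l (Z ω) ∂μ = l x := l.integral_comp_comm hZ
  have heq : ∀ᵐ ω ∂μ, l x - l (Z ω) = 0 := by
    refine (integral_eq_zero_iff_of_nonneg_ae ?_ ((integrable_const _).sub hlZ)).1 ?_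
    · filter_upwards [hZs] with ω hω using sub_nonneg.2 (hle _ hω)
    · simp [integral_sub (integrable_const _) hlZ, hlint]
  let V : Submodule ℝ E := LinearMap.ker (l : E →ₗ[ℝ] ℝ)
  have hV : Module.finrank ℝ V < n := by
    rw [← hn]
    refine Submodule.finrank_lt fun h => hl ?_
    ext z
    simpa using LinearMap.mem_ker.1 (h ▸ Submodule.mem_top : z ∈ V)
  obtain ⟨p, hp'⟩ := V.subtype.exists_leftInverse_of_injective V.ker_subtype
  have hp : ∀ v : V, p v = v := fun v => LinearMap.congr_fun hp' v
  let P : E →L[ℝ] V := LinearMap.toContinuousLinearMap p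
  have hZx : Integrable (fun ω => Z ω - x) μ := hZ.sub (integrable_const _)
  have hmem := ih _ hV (s := {v : V | x + v ∈ s})
    (fun v hv w hw a b ha hb hab => by
      have := hs hv hw ha hb hab
      have hxab : x = a • x + b • x := by rw [← add_smul, hab, one_smul]
      simp only [Set.mem_ofPred_eq, Submodule.coe_add, Submodule.coe_smul]
      convert this using 1
      nth_rewrite 1 [hxab]
      simp only [smul_add]
      abel)
    (Z := fun ω => P (Z ω - x)) (P.integrable_comp hZx)
    (by
      filter_upwards [hZs, heq] with ω hω hlω
      have hv : Z ω - x ∈ V := by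
        simp only [V, LinearMap.mem_ker, ContinuousLinearMap.coe_coe, map_sub]
        linarith
      have : P (Z ω - x) = ⟨Z ω - x, hv⟩ := hp ⟨Z ω - x, hv⟩
      simpa [this] using hω) rfl
  rw [P.integral_comp_comm hZx, integral_sub hZ (integrable_const _)] at hmem
  exact hx (by simpa [← hxdef] using hmem)

/-- Graph convex hull bounds, finite-dimensional case. If the slices of the
convex hull of the graph of `f` are enclosed between envelope functions `g_l, g_u` (with
values in the extended reals), then `𝔼[X] ∈ CH(K)` and
`g_l(𝔼[X]) ≤ 𝔼[f(X)] ≤ g_u(𝔼[X])`. -/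
theorem stmt_6 {Ω : Type*} [MeasurableSpace Ω] (ℙ : Measure Ω) [IsProbabilityMeasure ℙ]
    (m : ℕ) (K : Set (Fin m → ℝ)) (f : (Fin m → ℝ) → ℝ)
    (X : Ω → Fin m → ℝ) (hXK : ∀ ω, X ω ∈ K)
    (hXint : Integrable X ℙ) (hfXint : Integrable (fun ω => f (X ω)) ℙ)
    (gl gu : (Fin m → ℝ) → EReal)
    (henv : ∀ x ∈ convexHull ℝ K, ∀ y : ℝ,
      (x, y) ∈ convexHull ℝ ((fun x => (x, f x)) '' K) →
      gl x ≤ (y : EReal) ∧ (y : EReal) ≤ gu x) :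
    (∫ ω, X ω ∂ℙ) ∈ convexHull ℝ K ∧
    gl (∫ ω, X ω ∂ℙ) ≤ ((∫ ω, f (X ω) ∂ℙ : ℝ) : EReal) ∧
    ((∫ ω, f (X ω) ∂ℙ : ℝ) : EReal) ≤ gu (∫ ω, X ω ∂ℙ) := by
  have hX : (∫ ω, X ω ∂ℙ) ∈ convexHull ℝ K :=
    (convex_convexHull ℝ K).integral_mem_of_finiteDimensional hXint
      (.of_forall fun ω => subset_convexHull ℝ K (hXK ω))
  have hgraph : (∫ ω, (X ω, f (X ω)) ∂ℙ) ∈ convexHull ℝ ((fun x => (x, f x)) '' K) :=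
    (convex_convexHull ℝ _).integral_mem_of_finiteDimensional (hXint.prodMk hfXint)
      (.of_forall fun ω => subset_convexHull ℝ _ ⟨X ω, hXK ω, rfl⟩)
  rw [integral_pair hXint hfXint] at hgraph
  exact ⟨hX, henv _ hX _ hgraph⟩
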